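/- In a two-player finite game, if σ is the unique Nash equilibrium, then σ is quasi-strict: for each player n, every pure strategy outside the support of σ_n is a strictly inferior reply to σ. -/

import Mathlib

open Finset

variable {S1 S2 : Type*}

/-- `σ` is a mixed strategy on the finite set `S`. -/
def IsMixed {S : Type*} [Fintype S] (σ : S → ℝ) : Prop :=
  (∀ s, 0 ≤ σ s) ∧ ∑ s, σ s = 1

/-- Expected payoff in a bimatrix game with payoff function `G`. -/
noncomputable def bimatPay [Fintype S1] [Fintype S2]
    (G : S1 → S2 → ℝ) (σ : S1 → ℝ) (τ : S2 → ℝ) : ℝ :=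
  ∑ a, ∑ b, σ a * τ b * G a b

/-- `(x, y)` is a Nash equilibrium of the two-player game `(A, B)`. -/
def IsNash2 [Fintype S1] [Fintype S2]
    (A B : S1 → S2 → ℝ) (x : S1 → ℝ) (y : S2 → ℝ) : Prop :=
  IsMixed x ∧ IsMixed y ∧
  (∀ x', IsMixed x' → bimatPay A x' y ≤ bimatPay A x y) ∧
  (∀ y', IsMixed y' → bimatPay B x y' ≤ bimatPay B x y)

/-!
Existence of equilibria. Scarf's lemma, a parity argument on dominant sets, is applied to the
coordinate rankings of a fine finite net of a simplex; in the limit every closed cover `F i` of the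
simplex indexed by its vertices has a point lying in `F i` for every `i` of its support. On the
simplex over `S1 × S2`, let `F (i, j)` require that `i` and `j` are best replies to the marginals:
the marginals of such a point are an equilibrium.

Quasi-strictness. Let `(x, y)` be the unique equilibrium and suppose `x k = 0`. Pay player 1 a small
bonus `ε` for playing `k`; the perturbed game has an equilibrium `(x', y')`, which is close to
`(x, y)`. Since `y'` is close to `y`, a best reply to `v y' + ε e_k` is also one to `v y`, and every
payoff vector to which `y'` is a best reply has `y` as a best reply; so `(x', y)` is an equilibrium
of the original game and `x' = x`. As `x` does not use `k`, the bonus can be removed from `(x, y')`,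
which therefore is an equilibrium of the original game, and `y' = y`. Hence against `y` the strategy
`k` does no better than `x` even with the bonus, and strictly worse without it.
-/

section Parity

variable {V I : Type*}

lemma exists_odd_card_bipartiteBelow {X Y : Type*} (r : X → Y → Prop)
    [∀ a b, Decidable (r a b)] {s : Finset X} {t : Finset Y} {a : X} (ha : a ∈ s)
    (hodd : Odd #(t.bipartiteAbove r a))
    (heven : ∀ a' ∈ s, a' ≠ a → Even #(t.bipartiteAbove r a')) :
    ∃ b ∈ t, Odd #(s.bipartiteBelow r b) := by
  classical
  by_contra! hno
  have hright : Even (∑ b ∈ t, #(s.bipartiteBelow r b)) :=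
    even_sum _ fun b hb => Nat.not_odd_iff_even.1 (hno b hb)
  have hrest : Even (∑ a' ∈ s.erase a, #(t.bipartiteAbove r a')) :=
    even_sum _ fun a' ha' => heven a' (mem_of_mem_erase ha') (ne_of_mem_erase ha')
  rw [← sum_card_bipartiteAbove_eq_sum_card_bipartiteBelow, ← add_sum_erase _ _ ha] at hright
  exact Nat.not_even_iff_odd.2 (hodd.add_even hrest) hright

variable [DecidableEq I]

lemma image_erase_eq_image [DecidableEq V] {c : V → I} {W : Finset V} {x y : V} (hx : x ∈ W)
    (hy : y ∈ W) (hxy : x ≠ y) (hc : c x = c y) : (W.erase x).image c = W.image c := by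
  conv_rhs => rw [← insert_erase hx, image_insert]
  exact (insert_eq_self.2 (mem_image.2 ⟨y, mem_erase.2 ⟨hxy.symm, hy⟩, hc.symm⟩)).symm

lemma even_card_filter_image_eq {c : V → I} {s : Finset I} {W : Finset V} (hcard : #W = #s + 1)
    (hW : W.image c ⊆ s) : Even #{U ∈ W.powersetCard #s | U.image c = s} := by
  classical
  obtain ⟨x, hx, y, hy, hxy, hc⟩ := exists_ne_map_eq_of_card_lt_of_maps_to (by omega)
    fun v hv => hW (mem_image_of_mem c hv)
  by_cases hs : W.image c = s
  · suffices {U ∈ W.powersetCard #s | U.image c = s} = {W.erase x, W.erase y} by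
      rw [this, card_pair fun h => hxy (erase_injOn W hx hy h)]
      exact even_two
    ext U
    simp only [mem_filter, mem_powersetCard, mem_insert, mem_singleton]
    constructor
    · rintro ⟨⟨hUW, hU⟩, hUs⟩
      obtain ⟨z, hz, hzW⟩ := exists_eq_insert_iff.2 ⟨hUW, by omega⟩
      obtain rfl : U = W.erase z := by rw [← hzW, erase_insert hz]
      have hinj : Set.InjOn c (W.erase z) := card_image_iff.1 (by rw [hUs, hU])
      by_contra! hne
      have hxz : x ≠ z := fun h => hne.1 (by rw [h])
      have hyz : y ≠ z := fun h => hne.2 (by rw [h])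
      exact hxy (hinj (mem_erase.2 ⟨hxz, hx⟩) (mem_erase.2 ⟨hyz, hy⟩) hc)
    · rintro (rfl | rfl)
      · exact ⟨⟨erase_subset _ _, by rw [card_erase_of_mem hx]; omega⟩,
          (image_erase_eq_image hx hy hxy hc).trans hs⟩
      · exact ⟨⟨erase_subset _ _, by rw [card_erase_of_mem hy]; omega⟩,
          (image_erase_eq_image hy hx hxy.symm hc.symm).trans hs⟩
  · suffices {U ∈ W.powersetCard #s | U.image c = s} = ∅ by simp [this]
    refine filter_eq_empty_iff.2 fun U hU hUs => hs (hW.antisymm ?_)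
    exact hUs ▸ image_subset_image (mem_powersetCard.1 hU).1

end Parity

section Scarf

variable {V I α : Type*} [LinearOrder α] {f : I → V → α} {U W : Finset V} {m : I → V} {a b : I}
  {v w : V}

/-- Scarf's notion of a dominant set, for a family of orders on `V` given by rankings `f i`: no
element of `V` exceeds all of `U` in every order. -/
def IsDominant (f : I → V → α) (U : Finset V) : Prop :=
  ∀ v, ∃ i, ∀ u ∈ U, f i v ≤ f i u

/-- `m i` is the minimum of `U` in the `i`-th order. -/
def IsMinSelector (f : I → V → α) (U : Finset V) (m : I → V) : Prop :=
  ∀ i, m i ∈ U ∧ ∀ u ∈ U, f i (m i) ≤ f i u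

/-- The pivot rule of Scarf's algorithm: among the elements exceeding `m i` in all orders `i ≠ a`,
`v` is the largest in the `a`-th order. -/
def IsExchange (f : I → V → α) (m : I → V) (a : I) (v : V) : Prop :=
  (∀ i ≠ a, f i (m i) < f i v) ∧ ∀ w, (∀ i ≠ a, f i (m i) < f i w) → f a w ≤ f a v

lemma IsDominant.mono (hW : IsDominant f W) (hUW : U ⊆ W) : IsDominant f U := fun v =>
  (hW v).imp fun _ hi u hu => hi u (hUW hu)

lemma exists_isMinSelector (f : I → V → α) (hU : U.Nonempty) : ∃ m, IsMinSelector f U m := by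
  choose m hm using fun i => exists_min_image U (f i) hU
  exact ⟨m, hm⟩

lemma exists_isExchange [Finite V] (hw : ∀ i ≠ a, f i (m i) < f i w) :
    ∃ v, IsExchange f m a v := by
  obtain ⟨v, hv, hmax⟩ := Set.exists_max_image {w | ∀ i ≠ a, f i (m i) < f i w} (f a)
    (Set.toFinite _) ⟨w, hw⟩
  exact ⟨v, hv, hmax⟩

lemma IsExchange.unique (hf : ∀ i, Function.Injective (f i)) (hv : IsExchange f m a v)
    (hw : IsExchange f m a w) : v = w :=
  hf a ((hw.2 v hv.1).antisymm (hv.2 w hw.1))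

lemma IsExchange.le (hm : IsMinSelector f U m) (hU : IsDominant f U) (hv : IsExchange f m a v) :
    f a v ≤ f a (m a) := by
  obtain ⟨i, hi⟩ := hU v
  obtain rfl : i = a := by
    by_contra hia
    exact (hv.1 i hia).not_ge (hi _ (hm i).1)
  exact hi _ (hm i).1

lemma IsExchange.ne (hm : IsMinSelector f U m) (hU : IsDominant f U) (hab : a ≠ b)
    (hv : IsExchange f m a v) (hw : IsExchange f m b w) : v ≠ w := by
  rintro rfl
  exact (hw.1 a hab).not_ge (hv.le hm hU)

lemma IsExchange.notMem (hf : ∀ i, Function.Injective (f i)) (hm : IsMinSelector f U m)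
    (hU : IsDominant f U) (hab : a ≠ b) (hmab : m a = m b) (hv : IsExchange f m a v) : v ∉ U := by
  intro hvU
  obtain rfl : v = m a := hf a ((hv.le hm hU).antisymm ((hm a).2 v hvU))
  exact (hv.1 b hab.symm).ne (by rw [hmab])

lemma IsExchange.isDominant_insert [DecidableEq V] (hm : IsMinSelector f U m)
    (hU : IsDominant f U) (hv : IsExchange f m a v) : IsDominant f (insert v U) := by
  intro w
  by_cases hw : ∀ i ≠ a, f i (m i) < f i w
  · exact ⟨a, (forall_mem_insert _ _ _).2
      ⟨hv.2 w hw, fun u hu => ((hv.2 w hw).trans (hv.le hm hU)).trans ((hm a).2 u hu)⟩⟩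
  · push Not at hw
    obtain ⟨i, hia, hi⟩ := hw
    exact ⟨i, (forall_mem_insert _ _ _).2
      ⟨hi.trans (hv.1 i hia).le, fun u hu => hi.trans ((hm i).2 u hu)⟩⟩

lemma exists_isExchange_of_isDominant_insert [DecidableEq V] [DecidableEq I] [Fintype I]
    (hf : ∀ i, Function.Injective (f i)) (hm : IsMinSelector f U m)
    (hcard : #U + 1 = Fintype.card I) (hv : v ∉ U) (hd : IsDominant f (insert v U)) :
    ∃ a, Set.InjOn m (univ.erase a : Finset I) ∧ IsExchange f m a v := by
  obtain ⟨a, ha⟩ := hd v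
  have hlt_of_mem : ∀ u ∈ U, ∃ i ≠ a, m i = u ∧ f i (m i) < f i v := by
    intro u hu
    obtain ⟨i, hi⟩ := hd u
    obtain rfl : m i = u := hf i (((hm i).2 u hu).antisymm (hi _ (mem_insert_of_mem (hm i).1)))
    have hlt : f i (m i) < f i v :=
      (hi v (mem_insert_self v U)).lt_of_ne fun h => hv (hf i h ▸ hu)
    refine ⟨i, ?_, rfl, hlt⟩
    rintro rfl
    exact hlt.not_ge (ha _ (mem_insert_of_mem hu))
  have hinj : Set.InjOn m (univ.erase a : Finset I) := by
    have hsub : U ⊆ (univ.erase a).image m := fun u hu =>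
      let ⟨i, hia, hi, _⟩ := hlt_of_mem u hu
      mem_image.2 ⟨i, mem_erase.2 ⟨hia, mem_univ i⟩, hi⟩
    refine card_image_iff.1 (card_image_le.antisymm ?_)
    have := card_le_card hsub
    rw [card_erase_of_mem (mem_univ a), card_univ]
    omega
  refine ⟨a, hinj, fun j hj => ?_, fun w hw => ?_⟩
  · obtain ⟨i, hia, hi, hiv⟩ := hlt_of_mem (m j) (hm j).1
    rwa [hinj (by simpa using hia) (by simpa using hj) hi] at hiv
  · obtain ⟨i, hi⟩ := hd w
    obtain rfl : i = a := by
      by_contra hia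
      exact (hw i hia).not_ge (hi _ (mem_insert_of_mem (hm i).1))
    exact hi v (mem_insert_self v U)

lemma isDominant_insert_iff [DecidableEq V] [Fintype I] (hf : ∀ i, Function.Injective (f i))
    (hm : IsMinSelector f U m) (hU : IsDominant f U) (hcard : #U + 1 = Fintype.card I)
    (hab : a ≠ b) (hmab : m a = m b) (hv : v ∉ U) :
    IsDominant f (insert v U) ↔ IsExchange f m a v ∨ IsExchange f m b v := by
  classical
  refine ⟨fun hd => ?_, ?_⟩
  · obtain ⟨i, hinj, hi⟩ := exists_isExchange_of_isDominant_insert hf hm hcard hv hd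
    by_contra! hno
    have hai : a ≠ i := fun h => hno.1 (h ▸ hi)
    have hbi : b ≠ i := fun h => hno.2 (h ▸ hi)
    exact hab (hinj (by simpa using hai) (by simpa using hbi) hmab)
  · rintro (h | h) <;> exact h.isDominant_insert hm hU

section Rooms

variable [Fintype V] [Fintype I]

open Classical in
/-- The rooms of Scarf's parity argument: the dominant sets with one element for each order. -/
noncomputable def rooms (f : I → V → α) : Finset (Finset V) :=
  {W | #W = Fintype.card I ∧ IsDominant f W}

open Classical in
/-- The doors of Scarf's parity argument: the dominant sets, one element short of a room, that
carry all colours except `a`. -/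
noncomputable def doors [DecidableEq I] (f : I → V → α) (c : V → I) (a : I) : Finset (Finset V) :=
  {U | #U + 1 = Fintype.card I ∧ U.image c = univ.erase a ∧ IsDominant f U}

lemma mem_rooms : W ∈ rooms f ↔ #W = Fintype.card I ∧ IsDominant f W := by
  simp [rooms]

lemma mem_doors [DecidableEq I] {c : V → I} :
    U ∈ doors f c a ↔ #U + 1 = Fintype.card I ∧ U.image c = univ.erase a ∧ IsDominant f U := by
  simp [doors]

variable [DecidableEq V]

lemma mem_bipartiteAbove_rooms (hf : ∀ i, Function.Injective (f i)) (hm : IsMinSelector f U m)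
    (hU : IsDominant f U) (hcard : #U + 1 = Fintype.card I) (hab : a ≠ b) (hmab : m a = m b) :
    W ∈ (rooms f).bipartiteAbove (· ⊆ ·) U ↔
      ∃ v, (IsExchange f m a v ∨ IsExchange f m b v) ∧ insert v U = W := by
  rw [mem_bipartiteAbove, mem_rooms]
  constructor
  · rintro ⟨⟨hW, hWd⟩, hUW⟩
    obtain ⟨v, hv, rfl⟩ := exists_eq_insert_iff.2 ⟨hUW, hcard.trans hW.symm⟩
    exact ⟨v, (isDominant_insert_iff hf hm hU hcard hab hmab hv).1 hWd, rfl⟩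
  · rintro ⟨v, hex, rfl⟩
    have hv : v ∉ U :=
      hex.elim (·.notMem hf hm hU hab hmab) (·.notMem hf hm hU hab.symm hmab.symm)
    exact ⟨⟨(card_insert_of_notMem hv).trans hcard,
      (isDominant_insert_iff hf hm hU hcard hab hmab hv).2 hex⟩, subset_insert v U⟩

lemma card_bipartiteAbove_rooms_eq_one (hf : ∀ i, Function.Injective (f i))
    (hm : IsMinSelector f U m) (hU : IsDominant f U) (hcard : #U + 1 = Fintype.card I)
    (hab : a ≠ b) (hmab : m a = m b) (hv : IsExchange f m a v) (hb : ∀ w, ¬IsExchange f m b w) :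
    #((rooms f).bipartiteAbove (· ⊆ ·) U) = 1 := by
  refine card_eq_one.2 ⟨insert v U, ext fun W => ?_⟩
  rw [mem_bipartiteAbove_rooms hf hm hU hcard hab hmab, mem_singleton]
  constructor
  · rintro ⟨w, hw | hw, rfl⟩
    · rw [hv.unique hf hw]
    · exact absurd hw (hb w)
  · rintro rfl
    exact ⟨v, .inl hv, rfl⟩

lemma card_bipartiteAbove_rooms_eq_two (hf : ∀ i, Function.Injective (f i))
    (hm : IsMinSelector f U m) (hU : IsDominant f U) (hcard : #U + 1 = Fintype.card I)
    (hab : a ≠ b) (hmab : m a = m b) (hv : IsExchange f m a v) (hw : IsExchange f m b w) :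
    #((rooms f).bipartiteAbove (· ⊆ ·) U) = 2 := by
  have hvU : v ∉ U := hv.notMem hf hm hU hab hmab
  have hne : insert v U ≠ insert w U := fun h =>
    hv.ne hm hU hab hw ((insert_inj hvU).1 h)
  refine card_eq_two.2 ⟨insert v U, insert w U, hne, ext fun W => ?_⟩
  rw [mem_bipartiteAbove_rooms hf hm hU hcard hab hmab, mem_insert, mem_singleton]
  constructor
  · rintro ⟨x, hx | hx, rfl⟩
    · exact .inl (by rw [hv.unique hf hx])
    · exact .inr (by rw [hw.unique hf hx])
  · rintro (rfl | rfl)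
    exacts [⟨v, .inl hv, rfl⟩, ⟨w, .inr hw, rfl⟩]

lemma image_eq_univ_of_odd_card_doors [DecidableEq I] {c : V → I} (hW : W ∈ rooms f)
    (hodd : Odd #((doors f c a).bipartiteBelow (· ⊆ ·) W)) : W.image c = univ := by
  obtain ⟨hcard, hd⟩ := mem_rooms.1 hW
  have hpos : #(univ.erase a) + 1 = Fintype.card I := card_erase_add_one (mem_univ a)
  have hdoors : (doors f c a).bipartiteBelow (· ⊆ ·) W =
      {U ∈ W.powersetCard #(univ.erase a) | U.image c = univ.erase a} := by
    ext U
    rw [mem_bipartiteBelow, mem_doors, mem_filter, mem_powersetCard]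
    constructor
    · rintro ⟨⟨hU, hUc, -⟩, hUW⟩
      exact ⟨⟨hUW, by omega⟩, hUc⟩
    · rintro ⟨⟨hUW, hU⟩, hUc⟩
      exact ⟨⟨by omega, hUc, hd.mono hUW⟩, hUW⟩
  rw [hdoors] at hodd
  obtain ⟨U, hU⟩ := card_pos.1 hodd.pos
  obtain ⟨hU, hUc⟩ := mem_filter.1 hU
  have hsub : univ.erase a ⊆ W.image c := hUc ▸ image_subset_image (mem_powersetCard.1 hU).1
  have ha : a ∈ W.image c := by
    by_contra ha
    exact Nat.not_even_iff_odd.2 hodd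
      (even_card_filter_image_eq (by omega) (subset_erase.2 ⟨subset_univ _, ha⟩))
  rw [← univ_subset_iff, ← insert_erase (mem_univ a)]
  exact insert_subset ha hsub

end Rooms

/-- The slack vertices of Scarf's lemma: `s i` is the smallest element in the `i`-th order, and in
each other order it exceeds every vertex that is not slack. -/
structure IsSlack (f : I → V → α) (s : I → V) : Prop where
  lt : ∀ i v, v ≠ s i → f i (s i) < f i v
  lt_of_ne : ∀ i k v, k ≠ i → v ∉ Set.range s → f i v < f i (s k)

section Slack

variable {s : I → V}

lemma IsSlack.le (hs : IsSlack f s) (i : I) (v : V) : f i (s i) ≤ f i v := by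
  by_cases hv : v = s i
  · rw [hv]
  · exact (hs.lt i v hv).le

lemma IsSlack.exists_isExchange [Finite V] (hinj : Function.Injective s) (hs : IsSlack f s)
    (hm : ∀ i k, m i = s k → k = i) (a : I) : ∃ v, IsExchange f m a v := by
  refine _root_.exists_isExchange (w := s a) fun i hia => ?_
  by_cases hmi : m i ∈ Set.range s
  · obtain ⟨k, hk⟩ := hmi
    obtain rfl := hm i k hk.symm
    rw [← hk]
    exact hs.lt k _ (hinj.ne hia.symm)
  · exact hs.lt_of_ne i a _ hia.symm hmi

variable [Fintype I] [DecidableEq I] [DecidableEq V]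

lemma IsSlack.isDominant_image_erase (hs : IsSlack f s) (a : I) :
    IsDominant f ((univ.erase a).image s) := by
  intro v
  by_cases hv : ∃ k ≠ a, s k = v
  · obtain ⟨k, -, rfl⟩ := hv
    exact ⟨k, fun u _ => hs.le k u⟩
  refine ⟨a, forall_mem_image.2 fun k hk => ?_⟩
  by_cases hvs : v ∈ Set.range s
  · obtain ⟨j, rfl⟩ := hvs
    obtain rfl : j = a := by
      by_contra hja
      exact hv ⟨j, hja, rfl⟩
    exact hs.le j _
  · exact (hs.lt_of_ne a k v (ne_of_mem_erase hk) hvs).le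

lemma IsSlack.eq_of_mem_image_erase (hf : ∀ i, Function.Injective (f i)) (hs : IsSlack f s)
    (hm : IsMinSelector f ((univ.erase a).image s) m) {i : I} (hia : i ≠ a) : m i = s i :=
  hf i (((hm i).2 _ (mem_image_of_mem s (by simpa using hia))).antisymm (hs.le i _))

lemma IsSlack.eq_image_erase (hs : IsSlack f s) (hm : IsMinSelector f U m)
    (hcard : #U + 1 = Fintype.card I) {i k : I} (hik : k ≠ i) (hsk : s k ≠ s i) (hmi : m i = s k) :
    U = (univ.erase i).image s := by
  refine eq_of_subset_of_card_le (fun u hu => ?_) ?_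
  · have hle : f i (s k) ≤ f i u := hmi ▸ (hm i).2 u hu
    by_cases hus : u ∈ Set.range s
    · obtain ⟨l, rfl⟩ := hus
      refine mem_image_of_mem s (mem_erase.2 ⟨?_, mem_univ l⟩)
      rintro rfl
      exact hle.not_gt (hs.lt l _ hsk)
    · exact absurd (hs.lt_of_ne i k u hik hus) hle.not_gt
  · have hle : #((univ.erase i).image s) ≤ #(univ.erase i) := card_image_le
    rw [card_erase_of_mem (mem_univ i), card_univ] at hle
    omega

variable [Fintype V] [Nontrivial I]

-- The boundary door, which opens into one room only: the parity argument starts from it.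
lemma IsSlack.card_bipartiteAbove_rooms_image_erase (hf : ∀ i, Function.Injective (f i))
    (hinj : Function.Injective s) (hs : IsSlack f s) (a : I) :
    #((rooms f).bipartiteAbove (· ⊆ ·) ((univ.erase a).image s)) = 1 := by
  have hcard : #((univ.erase a).image s) + 1 = Fintype.card I := by
    rw [card_image_of_injective _ hinj]
    exact card_erase_add_one (mem_univ a)
  obtain ⟨m, hm⟩ := exists_isMinSelector f (card_pos.1 (by
    have := Fintype.one_lt_card (α := I)
    omega : 0 < #((univ.erase a).image s)))
  have hmi : ∀ i ≠ a, m i = s i := fun i hia => hs.eq_of_mem_image_erase hf hm hia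
  obtain ⟨k, hka, hk⟩ : ∃ k ≠ a, s k = m a := by simpa using (hm a).1
  obtain ⟨v, hv⟩ := _root_.exists_isExchange (f := f) (m := m) (a := a) (w := s a) fun i hia => by
    rw [hmi i hia]
    exact hs.lt i _ (hinj.ne hia.symm)
  refine card_bipartiteAbove_rooms_eq_one hf hm (hs.isDominant_image_erase a) hcard hka.symm
    (hk.symm.trans (hmi k hka).symm) hv fun w hw => ?_
  have haw : f a (s k) < f a w := hk ▸ hw.1 a hka.symm
  by_cases hws : w ∈ Set.range s
  · obtain ⟨l, rfl⟩ := hws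
    obtain rfl | hlk := eq_or_ne l k
    · exact haw.false
    · exact (hw.1 l hlk).not_ge (hs.le l _)
  · exact haw.not_gt (hs.lt_of_ne a k w hka hws)

lemma IsSlack.card_bipartiteAbove_rooms_of_ne (hf : ∀ i, Function.Injective (f i))
    {c : V → I} (hs : IsSlack f s) (hc : Function.LeftInverse c s) (hU : U ∈ doors f c a)
    (hne : U ≠ (univ.erase a).image s) : #((rooms f).bipartiteAbove (· ⊆ ·) U) = 2 := by
  obtain ⟨hcard, hUc, hd⟩ := mem_doors.1 hU
  have hI := Fintype.one_lt_card (α := I)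
  obtain ⟨m, hm⟩ := exists_isMinSelector f (card_pos.1 (by omega : 0 < #U))
  have hslack : ∀ i k, m i = s k → k = i := by
    intro i k hik
    by_contra hki
    have hUi := hs.eq_image_erase hm hcard hki (hc.injective.ne hki) hik
    have hcol : univ.erase i = univ.erase a := by
      rw [← hUc, hUi, image_image, hc.comp_eq_id, image_id]
    exact hne (hUi.trans (by rw [hcol]))
  obtain ⟨x, -, y, -, hxy, hmxy⟩ := exists_ne_map_eq_of_card_lt_of_maps_to
    (s := (univ : Finset I)) (t := U) (by rw [card_univ]; omega) fun i _ => (hm i).1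
  obtain ⟨v, hv⟩ := hs.exists_isExchange hc.injective hslack x
  obtain ⟨w, hw⟩ := hs.exists_isExchange hc.injective hslack y
  exact card_bipartiteAbove_rooms_eq_two hf hm hd hcard hxy hmxy hv hw

end Slack

lemma IsSlack.exists_isDominant_image_eq_univ [Finite V] [Fintype I] [DecidableEq I]
    [Nontrivial I] {s : I → V} {c : V → I} (hf : ∀ i, Function.Injective (f i))
    (hs : IsSlack f s) (hc : Function.LeftInverse c s) :
    ∃ W, IsDominant f W ∧ W.image c = univ := by
  classical
  have := Fintype.ofFinite V
  obtain ⟨a⟩ : Nonempty I := inferInstance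
  have hdoor : (univ.erase a).image s ∈ doors f c a := by
    refine mem_doors.2 ⟨?_, ?_, hs.isDominant_image_erase a⟩
    · rw [card_image_of_injective _ hc.injective]
      exact card_erase_add_one (mem_univ a)
    · rw [image_image, hc.comp_eq_id, image_id]
  obtain ⟨W, hW, hodd⟩ := exists_odd_card_bipartiteBelow (t := rooms f) (· ⊆ ·) hdoor
    (by rw [hs.card_bipartiteAbove_rooms_image_erase hf hc.injective]; exact odd_one)
    fun U hU hne => by rw [hs.card_bipartiteAbove_rooms_of_ne hf hc hU hne]; exact even_two
  exact ⟨W, (mem_rooms.1 hW).2, image_eq_univ_of_odd_card_doors hW hodd⟩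

variable {T β : Type*} [LinearOrder β]

/-- The ranking `p` of `T` extended to one slack vertex for each order: the slack vertex `i` lies
below everything in the `i`-th order and above all of `T` in the others. -/
def slackRanking [DecidableEq I] (p : I → T → β) (i : I) : T ⊕ I → WithBot (WithTop β) :=
  Sum.elim (fun t => (p i t : WithTop β)) fun k => if k = i then ⊥ else (⊤ : WithTop β)

lemma isSlack_toLex_slackRanking [DecidableEq I] (p : I → T → β) (e : T ⊕ I → α) :
    IsSlack (fun i v => toLex (slackRanking p i v, e v)) Sum.inr := by
  constructor
  · rintro i (t | k) hv
    · simp [slackRanking, Prod.Lex.toLex_lt_toLex]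
    · have hki : k ≠ i := by simpa using hv
      simp [slackRanking, Prod.Lex.toLex_lt_toLex, hki]
  · rintro i k (t | l) hki hv
    · refine Prod.Lex.toLex_lt_toLex.2 (.inl ?_)
      simpa only [slackRanking, Sum.elim_inl, Sum.elim_inr, if_neg hki] using
        WithBot.coe_lt_coe.2 (WithTop.coe_lt_top (p i t))
    · simp at hv

theorem scarf_lemma [Finite T] [Finite I] (p : I → T → β) (c : T → I) :
    ∃ (σ : Finset T) (C : Finset I), (∀ i ∈ C, ∃ t ∈ σ, c t = i) ∧
      ∀ t, ∃ i ∈ C, ∀ u ∈ σ, p i t ≤ p i u := by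
  classical
  have := Fintype.ofFinite T
  have := Fintype.ofFinite I
  cases isEmpty_or_nonempty T
  · exact ⟨∅, ∅, by simp, isEmptyElim⟩
  cases subsingleton_or_nontrivial I
  · obtain ⟨t, ht⟩ := Finite.exists_max fun t : T => p (c t) t
    refine ⟨{t}, {c t}, by simp, fun u => ⟨c t, by simp, ?_⟩⟩
    simpa [Subsingleton.elim (c u) (c t)] using ht u
  -- Ties in `slackRanking p` are broken by an enumeration of the vertices.
  let e := Fintype.equivFin (T ⊕ I)
  obtain ⟨W, hWd, hWc⟩ := (isSlack_toLex_slackRanking p e).exists_isDominant_image_eq_univ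
    (fun i v w h => e.injective (congrArg (fun q => (ofLex q).2) h))
    (c := Sum.elim c id) fun i => rfl
  refine ⟨univ.filter fun t => .inl t ∈ W, univ.filter fun i => .inr i ∉ W, fun i hi => ?_,
    fun t => ?_⟩
  · obtain ⟨t | k, hW, hk⟩ := mem_image.1 (hWc ▸ mem_univ i)
    · exact ⟨t, by simpa using hW, hk⟩
    · obtain rfl : k = i := hk
      simp [hW] at hi
  · obtain ⟨i, hi⟩ := hWd (.inl t)
    have hrank : ∀ v ∈ W, slackRanking p i (.inl t) ≤ slackRanking p i v := fun v hv =>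
      Prod.Lex.monotone_fst _ _ (hi v hv)
    refine ⟨i, ?_, fun u hu => ?_⟩
    · suffices Sum.inr i ∉ W by simpa
      exact fun hiW => by simpa [slackRanking] using hrank _ hiW
    · simpa [slackRanking] using hrank (.inl u) (by simpa using hu)

end Scarf

section KKM

variable {I : Type*} [Fintype I]

lemma one_sub_sum_le_of_net {T : Set (I → ℝ)} {δ : ℝ} (hδ : 0 ≤ δ)
    (hT : ∀ z ∈ stdSimplex ℝ I, ∃ t ∈ T, dist z t ≤ δ) {C : Finset I} (hC : C.Nonempty)
    {m : I → ℝ} (hm : ∀ i ∈ C, 0 ≤ m i) (hdom : ∀ t ∈ T, ∃ i ∈ C, t i ≤ m i) :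
    1 - ∑ i ∈ C, m i ≤ #C * δ := by
  classical
  have hcard : (0 : ℝ) < #C := by exact_mod_cast hC.card_pos
  by_contra! hlt
  set r : ℝ := (1 - ∑ i ∈ C, m i) / #C with hr
  have hδr : δ < r := by rwa [hr, lt_div_iff₀' hcard]
  let q : I → ℝ := fun i => if i ∈ C then m i + r else 0
  have hq : q ∈ stdSimplex ℝ I := by
    refine ⟨fun i => ?_, ?_⟩
    · simp only [q]
      split_ifs with hi
      · linarith [hm i hi]
      · rfl
    · simp only [q, sum_ite_mem, univ_inter, sum_add_distrib, sum_const, nsmul_eq_mul]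
      rw [hr, mul_div_cancel₀ _ hcard.ne']
      ring
  obtain ⟨t, ht, hqt⟩ := hT q hq
  obtain ⟨i, hi, hti⟩ := hdom t ht
  have hqi : q i = m i + r := if_pos hi
  have := (le_abs_self _).trans ((dist_le_pi_dist q t i).trans hqt)
  linarith

lemma le_add_of_one_sub_sum_le {z m : I → ℝ} (hz : z ∈ stdSimplex ℝ I) {C : Finset I} {ε : ℝ}
    (hm : ∀ i ∈ C, m i ≤ z i) (hε : 1 - ∑ i ∈ C, m i ≤ ε) {i : I} (hi : i ∈ C) :
    z i ≤ m i + ε := by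
  have hsingle : z i - m i ≤ ∑ k ∈ C, (z k - m k) :=
    single_le_sum (f := fun k => z k - m k) (fun k hk => sub_nonneg.2 (hm k hk)) hi
  have hsum : ∑ k ∈ C, z k ≤ 1 := hz.2 ▸ sum_le_univ_sum_of_nonneg hz.1
  rw [sum_sub_distrib] at hsingle
  linarith

lemma le_of_one_sub_sum_le {z m : I → ℝ} (hz : z ∈ stdSimplex ℝ I) {C : Finset I} {ε : ℝ}
    (hm : ∀ i ∈ C, m i ≤ z i) (hε : 1 - ∑ i ∈ C, m i ≤ ε) {i : I} (hi : i ∉ C) : z i ≤ ε := by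
  classical
  have hsum : z i + ∑ k ∈ C, z k ≤ 1 := by
    rw [← sum_insert hi, ← hz.2]
    exact sum_le_univ_sum_of_nonneg hz.1
  linarith [sum_le_sum hm]

lemma dist_le_of_one_sub_sum_le {z w m : I → ℝ} (hz : z ∈ stdSimplex ℝ I)
    (hw : w ∈ stdSimplex ℝ I) {C : Finset I} {ε : ℝ} (hmz : ∀ i ∈ C, m i ≤ z i)
    (hmw : ∀ i ∈ C, m i ≤ w i) (hε : 1 - ∑ i ∈ C, m i ≤ ε) (hε₀ : 0 ≤ ε) : dist z w ≤ ε := by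
  refine (dist_pi_le_iff hε₀).2 fun i => abs_le.2 ?_
  by_cases hi : i ∈ C
  · have hzi := le_add_of_one_sub_sum_le hz hmz hε hi
    have hwi := le_add_of_one_sub_sum_le hw hmw hε hi
    constructor <;> linarith [hmz i hi, hmw i hi]
  · have hzi := le_of_one_sub_sum_le hz hmz hε hi
    have hwi := le_of_one_sub_sum_le hw hmw hε hi
    constructor <;> linarith [hz.1 i, hw.1 i]

lemma exists_finite_net_stdSimplex {δ : ℝ} (hδ : 0 < δ) :
    ∃ T ⊆ stdSimplex ℝ I, T.Finite ∧ ∀ z ∈ stdSimplex ℝ I, ∃ t ∈ T, dist z t ≤ δ := by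
  obtain ⟨T, hTs, hfin, hcover⟩ := (isCompact_stdSimplex ℝ I).finite_cover_balls hδ
  refine ⟨T, hTs, hfin, fun z hz => ?_⟩
  obtain ⟨t, ht, hzt⟩ := Set.mem_iUnion₂.1 (hcover hz)
  exact ⟨t, ht, (Metric.mem_ball.1 hzt).le⟩

variable [Nonempty I]

lemma exists_mem_stdSimplex_forall_dist_le {ε : ℝ} (hε : 0 < ε) (c : (I → ℝ) → I) :
    ∃ z ∈ stdSimplex ℝ I, ∀ i, z i ≤ ε ∨ ∃ w ∈ stdSimplex ℝ I, c w = i ∧ dist z w ≤ ε := by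
  classical
  have hcard : (0 : ℝ) < Fintype.card I := by exact_mod_cast Fintype.card_pos
  have hδ : 0 < ε / Fintype.card I := div_pos hε hcard
  obtain ⟨T, hTs, hfin, hnet⟩ := exists_finite_net_stdSimplex (I := I) hδ
  have : Finite T := hfin
  obtain ⟨σ, C, hcolor, hdom⟩ := scarf_lemma (fun i (t : T) => (t : I → ℝ) i) fun t => c t
  obtain ⟨t, ht, -⟩ := hnet _ (single_mem_stdSimplex ℝ (Classical.arbitrary I))
  obtain ⟨i₀, hi₀, -⟩ := hdom ⟨t, ht⟩
  obtain ⟨s₀, hs₀, -⟩ := hcolor i₀ hi₀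
  let m : I → ℝ := fun i => σ.inf' ⟨s₀, hs₀⟩ fun t => (t : I → ℝ) i
  have hmle : ∀ s ∈ σ, ∀ i, m i ≤ (s : I → ℝ) i := fun s hs i => inf'_le _ hs
  have hdef : 1 - ∑ i ∈ C, m i ≤ ε := by
    refine (one_sub_sum_le_of_net hδ.le hnet ⟨i₀, hi₀⟩
      (fun i _ => le_inf' _ _ fun s _ => (hTs s.2).1 i) fun t ht => ?_).trans ?_
    · exact (hdom ⟨t, ht⟩).imp fun i hi => ⟨hi.1, le_inf' _ _ hi.2⟩
    · rw [← mul_div_assoc, div_le_iff₀ hcard, mul_comm]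
      exact mul_le_mul_of_nonneg_left (mod_cast card_le_univ C) hε.le
  refine ⟨s₀, hTs s₀.2, fun i => ?_⟩
  by_cases hi : i ∈ C
  · obtain ⟨w, hw, hwi⟩ := hcolor i hi
    exact .inr ⟨w, hTs w.2, hwi, dist_le_of_one_sub_sum_le (hTs s₀.2) (hTs w.2)
      (fun k _ => hmle s₀ hs₀ k) (fun k _ => hmle w hw k) hdef hε.le⟩
  · exact .inl (le_of_one_sub_sum_le (hTs s₀.2) (fun k _ => hmle s₀ hs₀ k) hdef hi)

lemma exists_mem_stdSimplex_forall_mem_cthickening {F : I → Set (I → ℝ)}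
    (hcover : ∀ z ∈ stdSimplex ℝ I, ∃ i, z ∈ F i) {ε : ℝ} (hε : 0 < ε) :
    ∃ z ∈ stdSimplex ℝ I, ∀ i, z i ≤ ε ∨ z ∈ Metric.cthickening ε (F i) := by
  have hcolor : ∀ z, ∃ i, z ∈ stdSimplex ℝ I → z ∈ F i := fun z => by
    by_cases hz : z ∈ stdSimplex ℝ I
    · exact (hcover z hz).imp fun i hi _ => hi
    · exact ⟨Classical.arbitrary I, fun h => absurd h hz⟩
  choose c hc using hcolor
  obtain ⟨z, hz, hnear⟩ := exists_mem_stdSimplex_forall_dist_le hε c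
  refine ⟨z, hz, fun i => (hnear i).imp_right ?_⟩
  rintro ⟨w, hw, rfl, hzw⟩
  exact Metric.mem_cthickening_of_dist_le z w _ _ (hc w hw) hzw

theorem exists_mem_stdSimplex_of_closed_cover {F : I → Set (I → ℝ)} (hF : ∀ i, IsClosed (F i))
    (hcover : ∀ z ∈ stdSimplex ℝ I, ∃ i, z ∈ F i) :
    ∃ z ∈ stdSimplex ℝ I, ∀ i, 0 < z i → z ∈ F i := by
  let ε : ℕ → ℝ := fun n => 1 / (n + 1)
  have hε : ∀ n, 0 < ε n := fun n => Nat.one_div_pos_of_nat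
  let K : ℕ → Set (I → ℝ) := fun n =>
    stdSimplex ℝ I ∩ ⋂ i, {z | z i ≤ ε n} ∪ Metric.cthickening (ε n) (F i)
  have hclosed : ∀ n, IsClosed (K n) := fun n => (isClosed_stdSimplex ℝ I).inter <|
    isClosed_iInter fun i =>
      (isClosed_le (continuous_apply i) continuous_const).union Metric.isClosed_cthickening
  have hanti : ∀ n, K (n + 1) ⊆ K n := fun n => Set.inter_subset_inter_right _ <|
    Set.iInter_mono fun i => Set.union_subset_union
      (fun z (hz : z i ≤ _) => hz.trans (Nat.one_div_le_one_div n.le_succ))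
      (Metric.cthickening_mono (Nat.one_div_le_one_div n.le_succ) _)
  have hne : ∀ n, (K n).Nonempty := fun n => by
    obtain ⟨z, hz, hzF⟩ := exists_mem_stdSimplex_forall_mem_cthickening hcover (hε n)
    exact ⟨z, hz, Set.mem_iInter.2 hzF⟩
  obtain ⟨z, hz⟩ := IsCompact.nonempty_iInter_of_sequence_nonempty_isCompact_isClosed K hanti hne
    ((isCompact_stdSimplex ℝ I).of_isClosed_subset (hclosed 0) Set.inter_subset_left) hclosed
  rw [Set.mem_iInter] at hz
  refine ⟨z, (hz 0).1, fun i hi => ?_⟩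
  rw [← (hF i).closure_eq, Metric.closure_eq_iInter_cthickening]
  refine Set.mem_iInter₂.2 fun δ hδ => ?_
  obtain ⟨n, hn⟩ := exists_nat_one_div_lt (lt_min hi hδ)
  obtain ⟨hnz, hnδ⟩ := lt_min_iff.1 hn
  exact Metric.cthickening_mono hnδ.le _
    ((Set.mem_iInter.1 (hz n).2 i).resolve_left fun h => hnz.not_ge h)

end KKM

open Filter Topology Matrix

section BestReply

variable {S : Type*} {x v : S → ℝ} {i : S}

/-- The mixed strategy `x` puts weight only on pure strategies of maximal payoff, where `v i` is the
payoff of the pure strategy `i`. -/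
def IsBestReply (x v : S → ℝ) : Prop :=
  ∀ i, 0 < x i → ∀ k, v k ≤ v i

lemma IsBestReply.of_add {d : S → ℝ} (h : IsBestReply x (v + d)) (hd : 0 ≤ d)
    (hx : ∀ i, 0 < x i → d i = 0) : IsBestReply x v := fun i hi k =>
  calc v k ≤ v k + d k := le_add_of_nonneg_right (hd k)
    _ ≤ v i + d i := h i hi k
    _ = v i := by rw [hx i hi, add_zero]

lemma isClosed_setOf_isBestReply : IsClosed {p : (S → ℝ) × (S → ℝ) | IsBestReply p.1 p.2} := by
  simp only [IsBestReply, Set.ofPred_forall]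
  refine isClosed_iInter fun i => isClosed_imp (isOpen_lt (by fun_prop) (by fun_prop)) ?_
  simp only [Set.ofPred_forall]
  exact isClosed_iInter fun k => isClosed_le (by fun_prop) (by fun_prop)

section Finite

variable [Finite S]

lemma eventually_isBestReply_of_payoff (v : S → ℝ) :
    ∀ᶠ w in 𝓝 v, ∀ x, IsBestReply x w → IsBestReply x v := by
  have hlt : ∀ᶠ w in 𝓝 v, ∀ i k, v i < v k → w i < w k := by
    refine eventually_all.2 fun i => eventually_all.2 fun k => ?_
    by_cases hik : v i < v k
    · exact ((continuous_apply i).continuousAt.eventually_lt (continuous_apply k).continuousAt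
        hik).mono fun w hw _ => hw
    · exact .of_forall fun w h => absurd h hik
  filter_upwards [hlt] with w hw x hx i hi k
  by_contra! hik
  exact (hx i hi k).not_gt (hw i k hik)

lemma eventually_isBestReply_of_strategy (x : S → ℝ) :
    ∀ᶠ x' in 𝓝 x, ∀ v, IsBestReply x' v → IsBestReply x v := by
  have hpos : ∀ᶠ x' in 𝓝 x, ∀ i, 0 < x i → 0 < x' i := by
    refine eventually_all.2 fun i => ?_
    by_cases hi : 0 < x i
    · exact ((continuous_apply i).continuousAt.eventually_const_lt hi :
        ∀ᶠ x' in 𝓝 x, 0 < x' i).mono fun w hw _ => hw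
    · exact .of_forall fun w h => absurd h hi
  filter_upwards [hpos] with x' hx' v hv i hi
  exact hv i (hx' i hi)

end Finite

variable [Fintype S]

lemma IsMixed.exists_pos (hx : IsMixed x) : ∃ i, 0 < x i := by
  by_contra! h
  have := hx.2.symm.trans_le (sum_nonpos fun i _ => h i)
  norm_num at this

lemma IsMixed.dotProduct_le (hx : IsMixed x) {c : ℝ} (hc : ∀ i, v i ≤ c) : x ⬝ᵥ v ≤ c :=
  calc x ⬝ᵥ v ≤ ∑ i, x i * c := sum_le_sum fun i _ => mul_le_mul_of_nonneg_left (hc i) (hx.1 i)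
    _ = c := by rw [← sum_mul, hx.2, one_mul]

lemma IsMixed.dotProduct_lt (hx : IsMixed x) {c : ℝ} (hc : ∀ k, v k ≤ c) (hi : 0 < x i)
    (hlt : v i < c) : x ⬝ᵥ v < c :=
  calc x ⬝ᵥ v < ∑ i, x i * c :=
        sum_lt_sum (fun k _ => mul_le_mul_of_nonneg_left (hc k) (hx.1 k))
          ⟨i, mem_univ i, mul_lt_mul_of_pos_left hlt hi⟩
    _ = c := by rw [← sum_mul, hx.2, one_mul]

lemma IsBestReply.dotProduct_eq (hx : IsMixed x) (h : IsBestReply x v) (hi : 0 < x i) :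
    x ⬝ᵥ v = v i :=
  calc x ⬝ᵥ v = ∑ k, x k * v i := sum_congr rfl fun k _ => by
        obtain hk | hk := (hx.1 k).eq_or_lt
        · rw [← hk, zero_mul, zero_mul]
        · rw [(h i hi k).antisymm (h k hk i)]
    _ = v i := by rw [← sum_mul, hx.2, one_mul]

lemma IsMixed.forall_dotProduct_le_iff (hx : IsMixed x) :
    (∀ x', IsMixed x' → x' ⬝ᵥ v ≤ x ⬝ᵥ v) ↔ IsBestReply x v := by
  classical
  constructor
  · intro h i hi k
    by_contra! hik
    have hpure : ∀ j, v j ≤ x ⬝ᵥ v := fun j => by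
      simpa using h _ (single_mem_stdSimplex ℝ j)
    exact (hx.dotProduct_lt hpure hi (hik.trans_le (hpure k))).false
  · intro h x' hx'
    obtain ⟨i, hi⟩ := hx.exists_pos
    rw [h.dotProduct_eq hx hi]
    exact hx'.dotProduct_le (h i hi)

end BestReply

section Equilibrium

variable [Fintype S1] [Fintype S2] {v : (S2 → ℝ) → S1 → ℝ} {w : (S1 → ℝ) → S2 → ℝ} {x : S1 → ℝ}
  {y : S2 → ℝ}

/-- `(x, y)` is an equilibrium in mixed strategies of the game in which `v y i` is the payoff of
the pure strategy `i` of player 1 against `y`, and `w x j` that of the pure strategy `j` of player 2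
against `x`; bilinearity of the payoffs is not imposed. -/
structure IsEquilibrium (v : (S2 → ℝ) → S1 → ℝ) (w : (S1 → ℝ) → S2 → ℝ) (x : S1 → ℝ)
    (y : S2 → ℝ) : Prop where
  isMixed_left : IsMixed x
  isMixed_right : IsMixed y
  isBestReply_left : IsBestReply x (v y)
  isBestReply_right : IsBestReply y (w x)

lemma IsEquilibrium.swap (h : IsEquilibrium v w x y) : IsEquilibrium w v y x :=
  ⟨h.isMixed_right, h.isMixed_left, h.isBestReply_right, h.isBestReply_left⟩

lemma exists_pos_of_linearMap_pos {X Y : Type*} [Finite X] [Finite Y] {f : X → Y} {z : X → ℝ}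
    {b : Y} (h : 0 < FunOnFinite.linearMap ℝ ℝ f z b) : ∃ a, f a = b ∧ 0 < z a := by
  classical
  have := Fintype.ofFinite X
  rw [FunOnFinite.linearMap_apply_apply] at h
  by_contra! hno
  exact h.not_ge (sum_nonpos fun a ha => hno a (mem_filter.1 ha).2)

theorem exists_isEquilibrium [Nonempty S1] [Nonempty S2] (hv : Continuous v) (hw : Continuous w) :
    ∃ x y, IsEquilibrium v w x y := by
  let μ₁ : (S1 × S2 → ℝ) → S1 → ℝ := FunOnFinite.linearMap ℝ ℝ Prod.fst
  let μ₂ : (S1 × S2 → ℝ) → S2 → ℝ := FunOnFinite.linearMap ℝ ℝ Prod.snd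
  have hμ₁ : Continuous μ₁ := FunOnFinite.continuous_linearMap ℝ ℝ _
  have hμ₂ : Continuous μ₂ := FunOnFinite.continuous_linearMap ℝ ℝ _
  let F : S1 × S2 → Set (S1 × S2 → ℝ) := fun p =>
    {z | ∀ k, v (μ₂ z) k ≤ v (μ₂ z) p.1} ∩ {z | ∀ l, w (μ₁ z) l ≤ w (μ₁ z) p.2}
  have hF : ∀ p, IsClosed (F p) := fun p => by
    simp only [F, Set.ofPred_forall]
    exact (isClosed_iInter fun k => isClosed_le (by fun_prop) (by fun_prop)).inter
      (isClosed_iInter fun l => isClosed_le (by fun_prop) (by fun_prop))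
  obtain ⟨z, hz, hzF⟩ := exists_mem_stdSimplex_of_closed_cover hF fun z _ =>
    let ⟨i, hi⟩ := Finite.exists_max (v (μ₂ z))
    let ⟨j, hj⟩ := Finite.exists_max (w (μ₁ z))
    ⟨(i, j), hi, hj⟩
  refine ⟨μ₁ z, μ₂ z, stdSimplex.image_linearMap _ ⟨z, hz, rfl⟩,
    stdSimplex.image_linearMap _ ⟨z, hz, rfl⟩, fun i hi => ?_, fun j hj => ?_⟩
  · obtain ⟨p, rfl, hp⟩ := exists_pos_of_linearMap_pos hi
    exact (hzF p hp).1
  · obtain ⟨p, rfl, hp⟩ := exists_pos_of_linearMap_pos hj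
    exact (hzF p hp).2

lemma isClosed_setOf_isEquilibrium_add (hv : Continuous v) (hw : Continuous w) :
    IsClosed {p : (S1 → ℝ) × (S1 → ℝ) × (S2 → ℝ) |
      IsEquilibrium (fun y => v y + p.1) w p.2.1 p.2.2} := by
  have hset : {p : (S1 → ℝ) × (S1 → ℝ) × (S2 → ℝ) |
      IsEquilibrium (fun y => v y + p.1) w p.2.1 p.2.2} =
      {p | p.2.1 ∈ stdSimplex ℝ S1} ∩ {p | p.2.2 ∈ stdSimplex ℝ S2} ∩
        {p | IsBestReply p.2.1 (v p.2.2 + p.1)} ∩ {p | IsBestReply p.2.2 (w p.2.1)} := by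
    ext p
    exact ⟨fun h => ⟨⟨⟨h.1, h.2⟩, h.3⟩, h.4⟩, fun h => ⟨h.1.1.1, h.1.1.2, h.1.2, h.2⟩⟩
  rw [hset]
  refine (((IsClosed.preimage ?_ (isClosed_stdSimplex ℝ S1)).inter
    (IsClosed.preimage ?_ (isClosed_stdSimplex ℝ S2))).inter ?_).inter ?_
  · fun_prop
  · fun_prop
  · exact isClosed_setOf_isBestReply.preimage
      (f := fun p : (S1 → ℝ) × (S1 → ℝ) × (S2 → ℝ) => (p.2.1, v p.2.2 + p.1)) (by fun_prop)
  · exact isClosed_setOf_isBestReply.preimage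
      (f := fun p : (S1 → ℝ) × (S1 → ℝ) × (S2 → ℝ) => (p.2.2, w p.2.1)) (by fun_prop)

lemma IsEquilibrium.eventually_nhds_isEquilibrium (hv : Continuous v)
    (h : IsEquilibrium v w x y) :
    ∀ᶠ p : (S1 → ℝ) × (S1 → ℝ) × (S2 → ℝ) in 𝓝 (0, x, y),
      IsEquilibrium (fun y => v y + p.1) w p.2.1 p.2.2 → IsEquilibrium v w p.2.1 y := by
  have hpay : Tendsto (fun p : (S1 → ℝ) × (S1 → ℝ) × (S2 → ℝ) => v p.2.2 + p.1)
      (𝓝 (0, x, y)) (𝓝 (v y)) := Continuous.tendsto' (by fun_prop) _ _ (add_zero _)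
  have hstr : Tendsto (fun p : (S1 → ℝ) × (S1 → ℝ) × (S2 → ℝ) => p.2.2) (𝓝 (0, x, y)) (𝓝 y) :=
    Continuous.tendsto' (by fun_prop) _ _ rfl
  filter_upwards [hpay.eventually (eventually_isBestReply_of_payoff (v y)),
    hstr.eventually (eventually_isBestReply_of_strategy y)] with p hpay hstr hp
  exact ⟨hp.isMixed_left, h.isMixed_right, hpay _ hp.isBestReply_left,
    hstr _ hp.isBestReply_right⟩

lemma IsEquilibrium.eventually_eq_of_unique (hv : Continuous v) (hw : Continuous w)
    (h : IsEquilibrium v w x y) (huniq : ∀ x' y', IsEquilibrium v w x' y' → x' = x ∧ y' = y) :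
    ∀ᶠ d : S1 → ℝ in 𝓝 0, ∀ x' y', IsEquilibrium (fun y => v y + d) w x' y' → x' = x := by
  have hcompact : IsCompact (stdSimplex ℝ S1 ×ˢ stdSimplex ℝ S2) :=
    (isCompact_stdSimplex ℝ S1).prod (isCompact_stdSimplex ℝ S2)
  have hlocal : ∀ q ∈ stdSimplex ℝ S1 ×ˢ stdSimplex ℝ S2,
      ∀ᶠ p : (S1 → ℝ) × (S1 → ℝ) × (S2 → ℝ) in 𝓝 (0, q),
        IsEquilibrium (fun y => v y + p.1) w p.2.1 p.2.2 → p.2.1 = x := by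
    rintro ⟨x₀, y₀⟩ -
    by_cases hq : IsEquilibrium v w x₀ y₀
    · obtain ⟨rfl, rfl⟩ := huniq x₀ y₀ hq
      exact (h.eventually_nhds_isEquilibrium hv).mono fun p hp hpe => (huniq _ _ (hp hpe)).1
    · have hopen := (isClosed_setOf_isEquilibrium_add hv hw).isOpen_compl.mem_nhds
        (x := (0, x₀, y₀)) (by simpa using hq)
      exact mem_of_superset hopen fun p hp hpe => absurd hpe hp
  have hall := hcompact.eventually_forall_of_forall_eventually
    (P := fun d q => IsEquilibrium (fun y => v y + d) w q.1 q.2 → q.1 = x) hlocal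
  filter_upwards [hall] with d hd x' y' he
  exact hd (x', y') ⟨he.isMixed_left, he.isMixed_right⟩ he

lemma IsEquilibrium.lt_dotProduct_of_unique (hv : Continuous v) (hw : Continuous w)
    (h : IsEquilibrium v w x y) (huniq : ∀ x' y', IsEquilibrium v w x' y' → x' = x ∧ y' = y)
    {k : S1} (hk : x k = 0) : v y k < x ⬝ᵥ v y := by
  classical
  have hbonus : Tendsto (fun ε : ℝ => (Pi.single k ε : S1 → ℝ)) (𝓝[>] 0) (𝓝 0) :=
    ((continuous_single k).tendsto' 0 0 (Pi.single_zero k)).mono_left nhdsWithin_le_nhds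
  obtain ⟨ε, hstable, hε⟩ := ((hbonus.eventually (h.eventually_eq_of_unique hv hw huniq)).and
    self_mem_nhdsWithin).exists
  obtain ⟨i, hi⟩ := h.isMixed_left.exists_pos
  obtain ⟨j, -⟩ := h.isMixed_right.exists_pos
  have : Nonempty S1 := ⟨i⟩
  have : Nonempty S2 := ⟨j⟩
  have hne : ∀ i, 0 < x i → i ≠ k := fun i hi hik => hi.ne' (hik ▸ hk)
  obtain ⟨x', y', he⟩ := exists_isEquilibrium (v := fun y => v y + Pi.single k ε)
    (hv.add continuous_const) hw
  obtain rfl := hstable x' y' he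
  have hbest : IsBestReply x' (v y') := he.isBestReply_left.of_add
    (Pi.single_nonneg.2 hε.le) fun i hi => by simp [hne i hi]
  obtain ⟨-, rfl⟩ := huniq x' y'
    ⟨he.isMixed_left, he.isMixed_right, hbest, he.isBestReply_right⟩
  calc v y' k < v y' k + ε := lt_add_of_pos_right _ hε
    _ ≤ v y' i := by simpa [hne i hi] using he.isBestReply_left i hi k
    _ = x' ⬝ᵥ v y' := (hbest.dotProduct_eq he.isMixed_left hi).symm

theorem unique_equilibrium_quasi_strict_general (hv : Continuous v) (hw : Continuous w)
    (h : IsEquilibrium v w x y)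
    (huniq : ∀ x' y', IsEquilibrium v w x' y' → x' = x ∧ y' = y) :
    (∀ i, x i = 0 → v y i < x ⬝ᵥ v y) ∧ ∀ j, y j = 0 → w x j < y ⬝ᵥ w x :=
  ⟨fun _ => h.lt_dotProduct_of_unique hv hw huniq,
    fun _ => h.swap.lt_dotProduct_of_unique hw hv fun y' x' h' => (huniq x' y' h'.swap).symm⟩

end Equilibrium

section Bimatrix

variable [Fintype S1] [Fintype S2] {x : S1 → ℝ} {y : S2 → ℝ}

lemma bimatPay_eq_dotProduct_mulVec (G : S1 → S2 → ℝ) (x : S1 → ℝ) (y : S2 → ℝ) :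
    bimatPay G x y = x ⬝ᵥ of G *ᵥ y := by
  simp only [bimatPay, dotProduct, mulVec, of_apply, mul_sum]
  exact sum_congr rfl fun a _ => sum_congr rfl fun b _ => by ring

lemma bimatPay_eq_dotProduct_vecMul (G : S1 → S2 → ℝ) (x : S1 → ℝ) (y : S2 → ℝ) :
    bimatPay G x y = y ⬝ᵥ x ᵥ* of G := by
  rw [bimatPay_eq_dotProduct_mulVec, dotProduct_mulVec, dotProduct_comm]

lemma isNash2_iff_isEquilibrium {A B : S1 → S2 → ℝ} :
    IsNash2 A B x y ↔ IsEquilibrium (of A *ᵥ ·) (· ᵥ* of B) x y := by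
  simp only [IsNash2, bimatPay_eq_dotProduct_mulVec A, bimatPay_eq_dotProduct_vecMul B]
  constructor
  · rintro ⟨hx, hy, hA, hB⟩
    exact ⟨hx, hy, hx.forall_dotProduct_le_iff.1 hA, hy.forall_dotProduct_le_iff.1 hB⟩
  · rintro ⟨hx, hy, hA, hB⟩
    exact ⟨hx, hy, hx.forall_dotProduct_le_iff.2 hA, hy.forall_dotProduct_le_iff.2 hB⟩

lemma ite_eq_pi_single {S : Type*} [DecidableEq S] (i : S) :
    (fun a => if a = i then 1 else 0) = (Pi.single i 1 : S → ℝ) :=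
  funext fun a => (Pi.single_apply i 1 a).symm

lemma bimatPay_ite_left [DecidableEq S1] (G : S1 → S2 → ℝ) (i : S1) (y : S2 → ℝ) :
    bimatPay G (fun a => if a = i then 1 else 0) y = (of G *ᵥ y) i := by
  rw [bimatPay_eq_dotProduct_mulVec, ite_eq_pi_single, single_one_dotProduct]

lemma bimatPay_ite_right [DecidableEq S2] (G : S1 → S2 → ℝ) (x : S1 → ℝ) (j : S2) :
    bimatPay G x (fun b => if b = j then 1 else 0) = (x ᵥ* of G) j := by
  rw [bimatPay_eq_dotProduct_vecMul, ite_eq_pi_single, single_one_dotProduct]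

end Bimatrix

/-- Norde's theorem: a unique Nash equilibrium of a two-player finite game is
quasi-strict. -/
theorem unique_equilibrium_quasi_strict
    [Fintype S1] [Fintype S2] [DecidableEq S1] [DecidableEq S2]
    (A B : S1 → S2 → ℝ) (x : S1 → ℝ) (y : S2 → ℝ)
    (hNash : IsNash2 A B x y)
    (huniq : ∀ x' y', IsNash2 A B x' y' → x' = x ∧ y' = y) :
    (∀ i : S1, x i = 0 →
      bimatPay A (fun a => if a = i then 1 else 0) y < bimatPay A x y) ∧
    (∀ j : S2, y j = 0 →
      bimatPay B x (fun b => if b = j then 1 else 0) < bimatPay B x y) := by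
  simp only [isNash2_iff_isEquilibrium] at hNash huniq
  simp only [bimatPay_ite_left, bimatPay_ite_right, bimatPay_eq_dotProduct_mulVec A x y,
    bimatPay_eq_dotProduct_vecMul B x y]
  exact unique_equilibrium_quasi_strict_general (by fun_prop) (by fun_prop) hNash huniq
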